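/- There is a universal constant c > 0 such that the following holds. Let G be a finite simple graph with n vertices, m ≥ 2 edges, and average degree d = 2m/n, and let ε ∈ (0,1). Then there exist a subset S of the vertices and a partition S = V₁ ∪ ⋯ ∪ V_T such that: (a) the total number of edges of G lying inside the parts, Σ_{i=1}^T e(G[V_i]), is at least (1−ε)m; (b) every vertex of S has degree at least εd/3 in the induced subgraph G[S]; and (c) for each i ∈ [T], writing L_i for the Laplacian of G[V_i] and D_i for the diagonal matrix, indexed by V_i, whose entries are the degrees of the vertices in G[S], every vector z ∈ ℝ^{V_i} orthogonal to D_i^{1/2}·1 satisfies zᵀ D_i^{−1/2} L_i D_i^{−1/2} z ≥ (c·ε²/log² m)·‖z‖². -/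

import Mathlib

open Finset SimpleGraph Matrix
open scoped Classical

/-- The Laplacian of the single edge `{a,b}`: `(χ_a − χ_b)(χ_a − χ_b)ᵀ`,
as a symmetric function of the unordered pair. -/
noncomputable def edgeLapSym2 {n : ℕ} : Sym2 (Fin n) → Matrix (Fin n) (Fin n) ℝ :=
  Sym2.lift ⟨fun a b => Matrix.of fun i j =>
      ((if i = a then (1 : ℝ) else 0) - (if i = b then 1 else 0)) *
        ((if j = a then (1 : ℝ) else 0) - (if j = b then 1 else 0)),
    fun a b => by ext i j; simp only [Matrix.of_apply]; ring⟩

lemma sum_sum_eq_sum_sum_ite {V : Type*} [Fintype V] [DecidableEq V] (A C : Finset V) (a : V → V → ℝ) :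
    ∑ u ∈ A, ∑ v ∈ C, a u v = ∑ u, ∑ v, if u ∈ A ∧ v ∈ C then a u v else 0 := by
  simp_rw [ite_and]
  rw [← sum_subset (subset_univ A) fun u _ hu => by simp [hu]]
  refine sum_congr rfl fun u hu => ?_
  simp [hu]

lemma exists_weighted_median {V : Type*} [Fintype V] [Nonempty V] (w : V → ℝ)
    (hw : ∀ v, 0 ≤ w v) (y : V → ℝ) :
    ∃ t : ℝ, 2 * ∑ v with t < y v, w v ≤ ∑ v, w v ∧
      2 * ∑ v with y v < t, w v ≤ ∑ v, w v := by
  have hW : 0 ≤ ∑ v, w v := sum_nonneg fun v _ => hw v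
  set C := univ.filter fun x => 2 * ∑ v with y x < y v, w v ≤ ∑ v, w v with hC
  obtain ⟨M, -, hM⟩ := (univ : Finset V).exists_max_image y univ_nonempty
  have hMC : M ∈ C := by
    have : (univ.filter fun v => y M < y v) = ∅ :=
      filter_eq_empty_iff.2 fun v hv => not_lt.2 (hM v hv)
    simpa [hC, this] using hW
  obtain ⟨x, hxC, hx⟩ := C.exists_min_image y ⟨M, hMC⟩
  refine ⟨y x, by simpa [hC] using hxC, ?_⟩
  rcases (univ.filter fun v => y v < y x).eq_empty_or_nonempty with h0 | hne
  · simpa [h0] using hW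
  obtain ⟨x', hx'm, hx'⟩ := exists_max_image _ y hne
  have hlt : y x' < y x := by simpa using hx'm
  have hnot : x' ∉ C := fun h => absurd (hx x' h) (not_le.2 hlt)
  have hbig : ∑ v, w v < 2 * ∑ v with y x' < y v, w v := by simpa [hC] using hnot
  have hset : (univ.filter fun v => y x' < y v) = univ.filter fun v => ¬ y v < y x := by
    ext v
    simp only [mem_filter, mem_univ, true_and]
    refine ⟨fun h h' => absurd (hx' v (by simpa using h')) (not_le.2 h), fun h => ?_⟩
    exact hlt.trans_le (not_lt.1 h)
  rw [hset] at hbig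
  have := sum_filter_add_sum_filter_not univ (fun v => y v < y x) w
  linarith

section Cheeger

variable {V : Type*} [Fintype V] [DecidableEq V]

/-- Coarea inequality: an edge expansion bound for small sets gives an `ℓ¹` Poincaré inequality for
nonnegative functions with small support. -/
lemma mul_sum_le_sum_abs_sub_of_expansion (a : V → V → ℝ) (ha : ∀ u v, a u v = a v u)
    (w : V → ℝ) (hw : ∀ v, 0 ≤ w v) (φ : ℝ)
    (hφ : ∀ A : Finset V, 2 * ∑ v ∈ A, w v ≤ ∑ v, w v →
      φ * ∑ v ∈ A, w v ≤ ∑ u ∈ A, ∑ v ∈ Aᶜ, a u v)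
    (g : V → ℝ) (hg : ∀ v, 0 ≤ g v)
    (hsupp : 2 * ∑ v with 0 < g v, w v ≤ ∑ v, w v) :
    2 * (φ * ∑ v, w v * g v) ≤ ∑ u, ∑ v, a u v * |g u - g v| := by
  induction hk : (univ.filter fun v => 0 < g v).card using Nat.strong_induction_on
    generalizing g with
  | _ k ih =>
  set A := univ.filter fun v => 0 < g v with hA
  rcases A.eq_empty_or_nonempty with h0 | hne
  · have hz : ∀ v, g v = 0 := fun v => by
      by_contra hv
      have : v ∈ A := by simpa [hA] using lt_of_le_of_ne (hg v) (Ne.symm hv)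
      simp [h0] at this
    simp [hz]
  obtain ⟨x, hxA, hx⟩ := A.exists_min_image g hne
  have hδ : 0 < g x := by simpa [hA] using hxA
  set δ := g x with hδdef
  have hmem : ∀ v, v ∈ A ↔ 0 < g v := fun v => by simp [hA]
  have hzero : ∀ v, v ∉ A → g v = 0 := fun v hv =>
    le_antisymm (not_lt.1 fun h => hv ((hmem v).2 h)) (hg v)
  set g' : V → ℝ := fun v => if v ∈ A then g v - δ else 0 with hg'
  have hg'0 : ∀ v, 0 ≤ g' v := fun v => by
    simp only [hg']
    split_ifs with h
    · linarith [hx v h]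
    · exact le_rfl
  have hsub : (univ.filter fun v => 0 < g' v) ⊆ A.erase x := fun v hv => by
    have hv' : 0 < g' v := by simpa using hv
    simp only [hg'] at hv'
    split_ifs at hv' with h
    · refine mem_erase.2 ⟨?_, h⟩
      rintro rfl
      linarith
    · exact absurd hv' (lt_irrefl _)
  have hcard : (univ.filter fun v => 0 < g' v).card < k := by
    rw [← hk]
    exact (card_le_card hsub).trans_lt (card_erase_lt_of_mem hxA)
  have hsupp' : 2 * ∑ v with 0 < g' v, w v ≤ ∑ v, w v := by
    have : ∑ v with 0 < g' v, w v ≤ ∑ v ∈ A, w v :=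
      sum_le_sum_of_subset_of_nonneg (hsub.trans (erase_subset _ _)) fun v _ _ => hw v
    linarith
  have hrec := ih _ hcard g' hg'0 hsupp' rfl
  have hexp := hφ A hsupp
  have hcut : ∑ u ∈ A, ∑ v ∈ Aᶜ, a u v =
      ∑ u, ∑ v, if u ∈ A ∧ v ∉ A then a u v else 0 := by
    simpa only [mem_compl] using sum_sum_eq_sum_sum_ite A Aᶜ a
  have hcut' : ∑ u, ∑ v, (if v ∈ A ∧ u ∉ A then a u v else 0) =
      ∑ u, ∑ v, if u ∈ A ∧ v ∉ A then a u v else 0 := by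
    rw [sum_comm]
    simp_rw [fun u v => ha v u]
  have hpt : ∀ u v, a u v * |g u - g v| = a u v * |g' u - g' v| +
      δ * ((if u ∈ A ∧ v ∉ A then a u v else 0) +
        (if v ∈ A ∧ u ∉ A then a u v else 0)) := by
    intro u v
    by_cases hu : u ∈ A <;> by_cases hv : v ∈ A
    · simp [hg', hu, hv]
    · have := hx u hu
      simp only [hg', hu, hv, hzero v hv, if_true, if_false, sub_zero, not_true, not_false_eq_true,
        and_self]
      rw [abs_of_nonneg (by linarith), abs_of_nonneg (by linarith)]
      ring
    · have := hx v hv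
      simp only [hg', hu, hv, hzero u hu, if_true, if_false, zero_sub, abs_neg, not_true,
        not_false_eq_true, and_self]
      rw [abs_of_nonneg (by linarith), abs_of_nonneg (by linarith)]
      ring
    · simp [hg', hu, hv, hzero u hu, hzero v hv]
  have hsumw : ∑ v, w v * g v = ∑ v, w v * g' v + δ * ∑ v ∈ A, w v := by
    have h1 : ∑ v ∈ A, w v = ∑ v, if v ∈ A then w v else 0 := by simp
    rw [h1, mul_sum, ← sum_add_distrib]
    refine sum_congr rfl fun v _ => ?_
    by_cases hv : v ∈ A
    · simp only [hg', hv, if_true]; ring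
    · simp [hg', hv, hzero v hv]
  have hR : ∑ u, ∑ v, a u v * |g u - g v| = ∑ u, ∑ v, a u v * |g' u - g' v| +
      2 * (δ * ∑ u ∈ A, ∑ v ∈ Aᶜ, a u v) := by
    simp_rw [hpt, sum_add_distrib, ← mul_sum, sum_add_distrib]
    rw [hcut', hcut]
    ring
  rw [hR, hsumw]
  have := mul_le_mul_of_nonneg_left hexp hδ.le
  linarith

lemma sq_mul_sum_le_of_small_support (a : V → V → ℝ) (ha : ∀ u v, a u v = a v u)
    (ha0 : ∀ u v, 0 ≤ a u v) (w : V → ℝ) (hw : ∀ v, ∑ u, a v u ≤ w v) (φ : ℝ)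
    (hφ0 : 0 ≤ φ)
    (hφ : ∀ A : Finset V, 2 * ∑ v ∈ A, w v ≤ ∑ v, w v →
      φ * ∑ v ∈ A, w v ≤ ∑ u ∈ A, ∑ v ∈ Aᶜ, a u v)
    (p : V → ℝ) (hp : ∀ v, 0 ≤ p v)
    (hsupp : 2 * ∑ v with 0 < p v, w v ≤ ∑ v, w v) :
    φ ^ 2 * ∑ v, w v * p v ^ 2 ≤ ∑ u, ∑ v, a u v * (p u - p v) ^ 2 := by
  have hw0 : ∀ v, 0 ≤ w v := fun v => (sum_nonneg fun u _ => ha0 v u).trans (hw v)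
  have hiff : ∀ v, 0 < p v ^ 2 ↔ 0 < p v := fun v =>
    ⟨fun h => lt_of_le_of_ne (hp v) fun h0 => by simp [← h0] at h, fun h => by positivity⟩
  have hco := mul_sum_le_sum_abs_sub_of_expansion a ha w hw0 φ hφ (fun v => p v ^ 2)
    (fun v => sq_nonneg _) (by simpa only [hiff] using hsupp)
  have hpt : ∀ u v, φ * (a u v * |p u ^ 2 - p v ^ 2|) ≤
      a u v * (p u - p v) ^ 2 + φ ^ 2 / 2 * (a u v * p u ^ 2 + a u v * p v ^ 2) := by
    intro u v
    have h1 : φ * |p u ^ 2 - p v ^ 2| ≤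
        (p u - p v) ^ 2 + φ ^ 2 / 2 * (p u ^ 2 + p v ^ 2) := by
      have h2 : p u ^ 2 - p v ^ 2 = (p u - p v) * (p u + p v) := by ring
      rw [h2, abs_mul, abs_of_nonneg (add_nonneg (hp u) (hp v)), ← sq_abs (p u - p v)]
      nlinarith [sq_nonneg (|p u - p v| - φ / 2 * (p u + p v)),
        mul_nonneg (sq_nonneg φ) (sq_nonneg (p u - p v))]
    nlinarith [mul_le_mul_of_nonneg_left h1 (ha0 u v)]
  have hdeg : ∑ u, ∑ v, a u v * p u ^ 2 ≤ ∑ v, w v * p v ^ 2 := by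
    refine sum_le_sum fun u _ => ?_
    rw [← sum_mul]
    exact mul_le_mul_of_nonneg_right (hw u) (sq_nonneg _)
  have hdeg' : ∑ u, ∑ v, a u v * p v ^ 2 = ∑ u, ∑ v, a u v * p u ^ 2 := by
    rw [sum_comm]
    simp_rw [fun u v => ha v u]
  have hsum : φ * ∑ u, ∑ v, a u v * |p u ^ 2 - p v ^ 2| ≤
      ∑ u, ∑ v, a u v * (p u - p v) ^ 2 +
        φ ^ 2 / 2 * (∑ u, ∑ v, a u v * p u ^ 2 + ∑ u, ∑ v, a u v * p v ^ 2) := by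
    simp_rw [mul_sum, ← sum_add_distrib, mul_sum, ← sum_add_distrib]
    exact sum_le_sum fun u _ => sum_le_sum fun v _ => by
      simpa only [mul_add] using hpt u v
  rw [hdeg'] at hsum
  nlinarith [mul_le_mul_of_nonneg_left hco hφ0, mul_le_mul_of_nonneg_left hdeg (sq_nonneg φ)]

/-- The Cheeger inequality for a weighted graph `a` whose vertex weights `w` dominate the degrees. -/
lemma cheeger_inequality (a : V → V → ℝ) (ha : ∀ u v, a u v = a v u)
    (ha0 : ∀ u v, 0 ≤ a u v) (w : V → ℝ) (hw : ∀ v, ∑ u, a v u ≤ w v) (φ : ℝ)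
    (hφ0 : 0 ≤ φ)
    (hφ : ∀ A : Finset V, 2 * ∑ v ∈ A, w v ≤ ∑ v, w v →
      φ * ∑ v ∈ A, w v ≤ ∑ u ∈ A, ∑ v ∈ Aᶜ, a u v)
    (y : V → ℝ) (hy : ∑ v, w v * y v = 0) :
    φ ^ 2 * ∑ v, w v * y v ^ 2 ≤ ∑ u, ∑ v, a u v * (y u - y v) ^ 2 := by
  have hw0 : ∀ v, 0 ≤ w v := fun v => (sum_nonneg fun u _ => ha0 v u).trans (hw v)
  rcases isEmpty_or_nonempty V with h | h
  · simp
  obtain ⟨t, ht1, ht2⟩ := exists_weighted_median w hw0 y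
  have hp := sq_mul_sum_le_of_small_support a ha ha0 w hw φ hφ0 hφ
    (fun v => max (y v - t) 0) (fun v => le_max_right _ _)
    (by simpa only [lt_max_iff, lt_irrefl, or_false, sub_pos] using ht1)
  have hq := sq_mul_sum_le_of_small_support a ha ha0 w hw φ hφ0 hφ
    (fun v => max (t - y v) 0) (fun v => le_max_right _ _)
    (by simpa only [lt_max_iff, lt_irrefl, or_false, sub_pos] using ht2)
  have hshift : ∑ v, w v * y v ^ 2 ≤
      ∑ v, w v * max (y v - t) 0 ^ 2 + ∑ v, w v * max (t - y v) 0 ^ 2 := by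
    have h1 : ∑ v, w v * max (y v - t) 0 ^ 2 + ∑ v, w v * max (t - y v) 0 ^ 2 =
        ∑ v, w v * y v ^ 2 - 2 * t * ∑ v, w v * y v + t ^ 2 * ∑ v, w v := by
      rw [mul_sum, mul_sum, ← sum_add_distrib, ← sum_sub_distrib, ← sum_add_distrib]
      refine sum_congr rfl fun v _ => ?_
      rcases le_total (y v) t with h | h
      · rw [max_eq_right (by linarith), max_eq_left (by linarith)]; ring
      · rw [max_eq_left (by linarith), max_eq_right (by linarith)]; ring
    rw [h1, hy]
    nlinarith [mul_nonneg (sq_nonneg t) (sum_nonneg fun v (_ : v ∈ univ) => hw0 v)]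
  have henergy : ∑ u, ∑ v, a u v * (max (y u - t) 0 - max (y v - t) 0) ^ 2 +
      ∑ u, ∑ v, a u v * (max (t - y u) 0 - max (t - y v) 0) ^ 2 ≤
      ∑ u, ∑ v, a u v * (y u - y v) ^ 2 := by
    simp_rw [← sum_add_distrib, ← mul_add]
    refine sum_le_sum fun u _ => sum_le_sum fun v _ => mul_le_mul_of_nonneg_left ?_ (ha0 u v)
    rcases le_total (y u) t with h | h <;> rcases le_total (y v) t with h' | h' <;>
    [rw [max_eq_right (sub_nonpos.2 h), max_eq_left (sub_nonneg.2 h)];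
     rw [max_eq_right (sub_nonpos.2 h), max_eq_left (sub_nonneg.2 h)];
     rw [max_eq_left (sub_nonneg.2 h), max_eq_right (sub_nonpos.2 h)];
     rw [max_eq_left (sub_nonneg.2 h), max_eq_right (sub_nonpos.2 h)]] <;>
    [rw [max_eq_right (sub_nonpos.2 h'), max_eq_left (sub_nonneg.2 h')];
     rw [max_eq_left (sub_nonneg.2 h'), max_eq_right (sub_nonpos.2 h')];
     rw [max_eq_right (sub_nonpos.2 h'), max_eq_left (sub_nonneg.2 h')];
     rw [max_eq_left (sub_nonneg.2 h'), max_eq_right (sub_nonpos.2 h')]] <;>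
    nlinarith [mul_nonneg (sub_nonneg.2 h) (sub_nonneg.2 h')]
  nlinarith [mul_le_mul_of_nonneg_left hshift (sq_nonneg φ)]

end Cheeger

section Decomposition

variable {V : Type*} [Fintype V] [DecidableEq V]

lemma mul_log_two_le_of_le {a b : ℝ} (ha : 0 ≤ a) (hab : a ≤ b) :
    a * Real.log 2 ≤ (a + b) * Real.log (a + b) - a * Real.log a - b * Real.log b := by
  rcases ha.eq_or_lt with rfl | ha
  · simp
  have hb : 0 < b := ha.trans_le hab
  have h1 : Real.log 2 + Real.log a ≤ Real.log (a + b) := by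
    rw [← Real.log_mul (by norm_num) ha.ne']
    exact Real.log_le_log (by positivity) (by linarith)
  have h2 : Real.log b ≤ Real.log (a + b) := Real.log_le_log hb (by linarith)
  nlinarith [mul_le_mul_of_nonneg_left h1 ha.le, mul_le_mul_of_nonneg_left h2 hb.le]

/-- A vertex partition minimizing the number of cut edges plus an entropy term on the volumes of the
parts cuts few edges, and each of its parts expands. -/
lemma exists_expander_partition (B : V → V → ℝ) (hB : ∀ u v, B u v = B v u) (w : V → ℕ)
    (κ : ℝ) (hκ : 0 ≤ κ) :
    ∃ P : V → Fin (Fintype.card V + 1),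
      ∑ u, ∑ v, (if P u ≠ P v then B u v else 0) ≤
        κ * (((∑ v, w v : ℕ) : ℝ) * Real.log ((∑ v, w v : ℕ) : ℝ)) ∧
      ∀ i, ∀ A ⊆ univ.filter fun v => P v = i,
        2 * ∑ v ∈ A, w v ≤ ∑ v with P v = i, w v →
        κ * Real.log 2 / 2 * ((∑ v ∈ A, w v : ℕ) : ℝ) ≤
          ∑ u ∈ A, ∑ v ∈ (univ.filter fun v => P v = i) \ A, B u v := by
  set f : ℕ → ℝ := fun k => (k : ℝ) * Real.log k with hf
  have hf0 : ∀ k, 0 ≤ f k := fun k => mul_nonneg k.cast_nonneg (Real.log_natCast_nonneg k)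
  set Φ : (V → Fin (Fintype.card V + 1)) → ℝ := fun P =>
    ∑ u, ∑ v, (if P u ≠ P v then B u v else 0) + κ * ∑ i, f (∑ v with P v = i, w v) with hΦ
  obtain ⟨P, -, hP⟩ := (univ : Finset (V → Fin (Fintype.card V + 1))).exists_min_image Φ
    univ_nonempty
  refine ⟨P, ?_, fun i A hA hvol => ?_⟩
  · have h1 := hP (fun _ => 0) (mem_univ _)
    have h2 : Φ (fun _ => 0) = κ * f (∑ v, w v) := by
      simp only [hΦ, ne_eq, not_true, if_false, sum_const_zero, zero_add]
      rw [Fintype.sum_eq_single 0]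
      · simp
      · intro i hi
        simp [hf, hi.symm]
    have h3 : 0 ≤ κ * ∑ i, f (∑ v with P v = i, w v) :=
      mul_nonneg hκ (sum_nonneg fun i _ => hf0 _)
    rw [h2] at h1
    simp only [hΦ] at h1
    simp only [hf] at h1 h3 ⊢
    linarith
  rcases A.eq_empty_or_nonempty with rfl | ⟨x, hxA⟩
  · simp
  obtain ⟨j, hj⟩ : ∃ j, ∀ v, P v ≠ j := by
    by_contra! h
    have := Fintype.card_le_of_surjective P h
    simp at this
  have hAi : ∀ v ∈ A, P v = i := fun v hv => by simpa using hA hv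
  have hij : i ≠ j := fun h => hj x ((hAi x hxA).trans h)
  set Q : V → Fin (Fintype.card V + 1) := fun v => if v ∈ A then j else P v with hQ
  have hQA : ∀ v ∈ A, Q v = j := fun v hv => by simp [hQ, hv]
  have hQn : ∀ v, v ∉ A → Q v = P v := fun v hv => by simp [hQ, hv]
  set U := univ.filter fun v => P v = i with hU
  have hUm : ∀ v, v ∈ U ↔ P v = i := fun v => by simp [hU]
  have hQj : (univ.filter fun v => Q v = j) = A := by
    ext v
    by_cases hv : v ∈ A <;> simp [hv, hQA, hQn, hj]
  have hQi : (univ.filter fun v => Q v = i) = U \ A := by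
    ext v
    by_cases hv : v ∈ A <;> simp [hv, hQA, hQn, hUm, hij.symm]
  have hPj : (univ.filter fun v => P v = j) = ∅ := by
    simp [hj]
  have hQk : ∀ k, k ≠ i ∧ k ≠ j →
      (univ.filter fun v => Q v = k) = univ.filter fun v => P v = k := by
    rintro k ⟨hk1, hk2⟩
    ext v
    by_cases hv : v ∈ A
    · simp [hQA v hv, hAi v hv, hk1.symm, hk2.symm]
    · simp [hQn v hv]
  have hvolsum : ∑ k, f (∑ v with Q v = k, w v) - ∑ k, f (∑ v with P v = k, w v) =
      f (∑ v ∈ U \ A, w v) - f (∑ v ∈ U, w v) + f (∑ v ∈ A, w v) := by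
    rw [← sum_sub_distrib, Fintype.sum_eq_add i j hij]
    · rw [hQi, hQj, hPj]
      simp [hf, hU]
    · intro k hk
      rw [hQk k hk, sub_self]
  have hcut : ∑ u ∈ A, ∑ v ∈ U \ A, B u v =
      ∑ u, ∑ v, if u ∈ A ∧ v ∈ U \ A then B u v else 0 :=
    sum_sum_eq_sum_sum_ite A (U \ A) B
  have hcut' : ∑ u, ∑ v, (if v ∈ A ∧ u ∈ U \ A then B u v else 0) =
      ∑ u ∈ A, ∑ v ∈ U \ A, B u v := by
    rw [hcut, sum_comm]
    simp_rw [fun u v => hB v u]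
  have hcutsum : ∑ u, ∑ v, (if Q u ≠ Q v then B u v else 0) =
      ∑ u, ∑ v, (if P u ≠ P v then B u v else 0) + 2 * ∑ u ∈ A, ∑ v ∈ U \ A, B u v := by
    have h : ∀ u v, (if Q u ≠ Q v then B u v else 0) = (if P u ≠ P v then B u v else 0) +
        ((if u ∈ A ∧ v ∈ U \ A then B u v else 0) +
          (if v ∈ A ∧ u ∈ U \ A then B u v else 0)) := by
      intro u v
      by_cases hu : u ∈ A <;> by_cases hv : v ∈ A
      · simp [hu, hv, hQA, hAi]
      · by_cases hvi : P v = i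
        · simp [hu, hv, hQA, hQn, hAi, hUm, hvi, hij.symm]
        · simp [hu, hv, hQA, hQn, hAi, hUm, hvi, (hj v).symm, Ne.symm hvi]
      · by_cases hui : P u = i
        · simp [hu, hv, hQA, hQn, hAi, hUm, hui, hij]
        · simp [hu, hv, hQA, hQn, hAi, hUm, hui, hj u]
      · simp [hu, hv, hQn]
    simp_rw [h, sum_add_distrib]
    rw [hcut', ← hcut]
    ring
  have hmin := hP Q (mem_univ _)
  simp only [hΦ] at hmin
  rw [hcutsum] at hmin
  have hadd : ∑ v ∈ U \ A, w v + ∑ v ∈ A, w v = ∑ v ∈ U, w v := sum_sdiff hA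
  have hle : ∑ v ∈ A, w v ≤ ∑ v ∈ U \ A, w v := by omega
  have hent := mul_log_two_le_of_le (Nat.cast_nonneg (∑ v ∈ A, w v))
    (Nat.cast_le (α := ℝ).2 hle)
  have hfU : f (∑ v ∈ U, w v) = (((∑ v ∈ A, w v : ℕ) : ℝ) + ((∑ v ∈ U \ A, w v : ℕ) : ℝ)) *
      Real.log (((∑ v ∈ A, w v : ℕ) : ℝ) + ((∑ v ∈ U \ A, w v : ℕ) : ℝ)) := by
    simp only [hf]
    rw [← hadd, Nat.cast_add, add_comm]
  rw [← hfU] at hent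
  have hent' : ((∑ v ∈ A, w v : ℕ) : ℝ) * Real.log 2 ≤
      f (∑ v ∈ U, w v) - f (∑ v ∈ A, w v) - f (∑ v ∈ U \ A, w v) := hent
  have := mul_le_mul_of_nonneg_left hent' hκ
  have h4 : κ * ∑ k, f (∑ v with Q v = k, w v) = κ * ∑ k, f (∑ v with P v = k, w v) +
      κ * (f (∑ v ∈ U \ A, w v) - f (∑ v ∈ U, w v) + f (∑ v ∈ A, w v)) := by
    rw [← hvolsum]; ring
  rw [h4] at hmin
  linarith

/-- A vertex set maximizing the number of inner edges minus `t` per vertex has minimum degree at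
least `t` and loses at most `t` edges per vertex. -/
lemma exists_subset_min_degree (B : V → V → ℝ) (hB : ∀ u v, B u v = B v u)
    (hB0 : ∀ v, B v v = 0) (t : ℝ) :
    ∃ S : Finset V, (∀ v ∈ S, t ≤ ∑ u ∈ S, B v u) ∧
      ∑ u, ∑ v, B u v - 2 * t * Fintype.card V + 2 * t * S.card ≤
        ∑ u ∈ S, ∑ v ∈ S, B u v := by
  obtain ⟨S, -, hS⟩ := (univ : Finset (Finset V)).exists_max_image
    (fun S => ∑ u ∈ S, ∑ v ∈ S, B u v - 2 * t * S.card) univ_nonempty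
  refine ⟨S, fun v hv => ?_, ?_⟩
  · have h := hS (S.erase v) (mem_univ _)
    have hv' : v ∉ S.erase v := notMem_erase v S
    have hins : insert v (S.erase v) = S := insert_erase hv
    rw [← hins] at h ⊢
    rw [erase_insert hv', card_insert_of_notMem hv', sum_insert hv', sum_insert hv'] at h
    simp_rw [sum_insert hv', sum_add_distrib] at h
    rw [sum_insert hv', hB0]
    simp_rw [fun u => hB u v] at h
    rw [hB0] at h
    push_cast at h
    linarith
  · have h := hS univ (mem_univ _)
    simp only [card_univ] at h
    linarith

end Decomposition

lemma two_mul_sum_edgeFinset {V : Type*} [Fintype V] [DecidableEq V] (G : SimpleGraph V)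
    [DecidableRel G.Adj] (F : Sym2 V → ℝ) :
    2 * ∑ e ∈ G.edgeFinset, F e = ∑ u, ∑ v, if G.Adj u v then F s(u, v) else 0 := by
  have h1 : ∑ u, ∑ v, (if G.Adj u v then F s(u, v) else 0) =
      ∑ p : V × V with G.Adj p.1 p.2, F s(p.1, p.2) := by
    rw [sum_filter, Fintype.sum_prod_type]
  rw [h1, ← sum_fiberwise_of_maps_to (s := univ.filter fun p : V × V => G.Adj p.1 p.2)
    (t := G.edgeFinset) (g := fun p => s(p.1, p.2)) (fun p hp => by simpa using hp), mul_sum]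
  refine sum_congr rfl fun e he => ?_
  induction e using Sym2.ind with
  | _ a b =>
  have hab : G.Adj a b := by simpa using he
  have hfib : ((univ.filter fun p : V × V => G.Adj p.1 p.2).filter
      fun p => s(p.1, p.2) = s(a, b)) = {(a, b), (b, a)} := by
    ext ⟨x, y⟩
    simp only [mem_filter, mem_univ, true_and, Sym2.eq_iff, mem_insert, mem_singleton,
      Prod.mk.injEq]
    refine ⟨fun h => h.2, fun h => ⟨?_, h⟩⟩
    rcases h with ⟨rfl, rfl⟩ | ⟨rfl, rfl⟩
    · exact hab
    · exact hab.symm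
  rw [hfib, sum_pair (by simp [hab.ne])]
  simp only [Sym2.eq_swap (a := b) (b := a)]
  ring

lemma edgeLapSym2_quadratic_form {n : ℕ} (y : Fin n → ℝ) (a b : Fin n) :
    y ⬝ᵥ (edgeLapSym2 s(a, b) *ᵥ y) = (y a - y b) ^ 2 := by
  have h : edgeLapSym2 s(a, b) *ᵥ y = fun i =>
      ((if i = a then (1 : ℝ) else 0) - (if i = b then 1 else 0)) * (y a - y b) := by
    ext i
    simp only [edgeLapSym2, Sym2.lift_mk, mulVec, dotProduct, of_apply]
    simp_rw [mul_assoc, ← mul_sum, sub_mul, sum_sub_distrib]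
    simp
  rw [h]
  simp only [dotProduct]
  simp_rw [← mul_assoc, ← sum_mul, mul_sub, sum_sub_distrib]
  simp
  ring

theorem stmt_7 : ∃ c : ℝ, 0 < c ∧
    ∀ (n : ℕ) (G : SimpleGraph (Fin n)) [DecidableRel G.Adj],
    ∀ m : ℕ, m = G.edgeFinset.card → 2 ≤ m →
    ∀ d : ℝ, d = 2 * m / n →
    ∀ ε : ℝ, ε ∈ Set.Ioo (0 : ℝ) 1 →
    ∃ (S : Finset (Fin n)) (T : ℕ) (P : Fin n → Fin T),
      -- (a) the parts `V_i = {v ∈ S : P v = i}` together contain ≥ (1−ε)m edges of G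
      (1 - ε) * m ≤ ((G.edgeFinset.filter fun e =>
          (∀ v ∈ e, v ∈ S) ∧ ∃ i, ∀ v ∈ e, P v = i).card : ℝ) ∧
      -- (b) minimum degree in G[S]
      (∀ v ∈ S, ε * d / 3 ≤ ((S.filter fun u => G.Adj v u).card : ℝ)) ∧
      -- (c) spectral gap of each part, with degrees taken in G[S] (stated variationally;
      -- vectors on `V_i` are encoded as vectors on `Fin n` supported on `V_i`)
      ∀ (i : Fin T) (z : Fin n → ℝ),
        (∀ v, ¬(v ∈ S ∧ P v = i) → z v = 0) →
        (∑ v, z v * Real.sqrt ((S.filter fun u => G.Adj v u).card : ℝ)) = 0 →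
        (c * ε ^ 2 / (Real.log m) ^ 2) * (∑ v, (z v) ^ 2) ≤
          (fun y : Fin n → ℝ => y ⬝ᵥ
              ((∑ e ∈ G.edgeFinset.filter (fun e => ∀ v ∈ e, v ∈ S ∧ P v = i),
                edgeLapSym2 e) *ᵥ y))
            (fun v => z v / Real.sqrt ((S.filter fun u => G.Adj v u).card : ℝ)) := by
  refine ⟨Real.log 2 ^ 2 / 288, by positivity, ?_⟩
  intro n G _ m hm hm2 d hd ε hε
  obtain ⟨hε0, hε1⟩ := hε
  have hmR : (2 : ℝ) ≤ m := by exact_mod_cast hm2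
  have hlog2 : 0 < Real.log 2 := Real.log_pos (by norm_num)
  have hlogm : Real.log 2 ≤ Real.log m := Real.log_le_log (by norm_num) hmR
  have hlogm0 : 0 < Real.log m := hlog2.trans_le hlogm
  have hn : 0 < n := by
    rcases Nat.eq_zero_or_pos n with rfl | h
    · have : G.edgeFinset = ∅ := eq_empty_of_forall_notMem fun e => by
        induction e using Sym2.ind with
        | _ a b => exact a.elim0
      simp [this] at hm
      omega
    · exact h
  have hnR : (0 : ℝ) < n := by exact_mod_cast hn
  have hd0 : 0 < d := by rw [hd]; positivity
  have hdn : d * n = 2 * m := by rw [hd]; field_simp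
  set a : Fin n → Fin n → ℝ := fun u v => if G.Adj u v then 1 else 0 with ha
  have hasymm : ∀ u v, a u v = a v u := fun u v => by simp [ha, G.adj_comm]
  obtain ⟨S, hSdeg, hSvol⟩ := exists_subset_min_degree a hasymm (fun v => by simp [ha])
    (ε * d / 3)
  set deg : Fin n → ℕ := fun v => (S.filter fun u => G.Adj v u).card with hdeg
  have hdegR : ∀ v, (deg v : ℝ) = ∑ u ∈ S, a v u := fun v => by simp [hdeg, ha]
  have hmsum : ∑ u, ∑ v, a u v = 2 * m := by
    have h := two_mul_sum_edgeFinset G (fun _ => 1)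
    rw [hm]
    simpa [ha] using h.symm
  set w : Fin n → ℕ := fun v => if v ∈ S then deg v else 0 with hw
  set B : Fin n → Fin n → ℝ := fun u v => if u ∈ S ∧ v ∈ S then a u v else 0 with hB
  have hBsymm : ∀ u v, B u v = B v u := fun u v => by
    simp only [hB, hasymm u v, and_comm]
  have hBw : ∀ u, ∑ v, B u v = w u := fun u => by
    by_cases hu : u ∈ S
    · simp [hB, hw, hu, hdegR]
    · simp [hB, hw, hu]
  have hBS : ∑ u, ∑ v, B u v = ∑ u ∈ S, ∑ v ∈ S, a u v :=
    (sum_sum_eq_sum_sum_ite S S a).symm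
  have hBle : ∑ u, ∑ v, B u v ≤ 2 * m := by
    rw [← hmsum]
    refine sum_le_sum fun u _ => sum_le_sum fun v _ => ?_
    simp only [hB, ha]
    split_ifs <;> norm_num
  have hwsum : ((∑ v, w v : ℕ) : ℝ) = ∑ u, ∑ v, B u v := by
    push_cast
    exact sum_congr rfl fun u _ => (hBw u).symm
  set κ := ε / (6 * Real.log m) with hκ
  have hκ0 : 0 < κ := by positivity
  obtain ⟨P, hcut, hexp⟩ := exists_expander_partition B hBsymm w κ hκ0.le
  have hent : ((∑ v, w v : ℕ) : ℝ) * Real.log ((∑ v, w v : ℕ) : ℝ) ≤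
      2 * m * (2 * Real.log m) := by
    rcases Nat.eq_zero_or_pos (∑ v, w v) with h | h
    · rw [h]; simp; positivity
    have hpos : (0 : ℝ) < ((∑ v, w v : ℕ) : ℝ) := by exact_mod_cast h
    have hle : ((∑ v, w v : ℕ) : ℝ) ≤ 2 * m := hwsum.le.trans hBle
    have h1 : Real.log ((∑ v, w v : ℕ) : ℝ) ≤ 2 * Real.log m := by
      refine (Real.log_le_log hpos hle).trans ?_
      rw [Real.log_mul (by norm_num) (by positivity)]
      linarith
    exact mul_le_mul hle h1 (Real.log_natCast_nonneg _) (by positivity)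
  have hcut' : ∑ u, ∑ v, (if P u ≠ P v then B u v else 0) ≤ 2 * ε * m / 3 := by
    refine (hcut.trans (mul_le_mul_of_nonneg_left hent hκ0.le)).trans_eq ?_
    rw [hκ]
    field_simp
    ring
  have hSpos : ∀ v ∈ S, (0 : ℝ) < deg v := fun v hv => by
    rw [hdegR]
    exact lt_of_lt_of_le (by positivity) (hSdeg v hv)
  refine ⟨S, _, P, ?_, fun v hv => ?_, fun i z hz hzorth => ?_⟩
  · have h := two_mul_sum_edgeFinset G
      (fun e => if (∀ v ∈ e, v ∈ S) ∧ ∃ i, ∀ v ∈ e, P v = i then 1 else 0)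
    rw [← sum_filter, sum_const, nsmul_eq_mul, mul_one] at h
    have hin : 2 * ((G.edgeFinset.filter fun e =>
        (∀ v ∈ e, v ∈ S) ∧ ∃ i, ∀ v ∈ e, P v = i).card : ℝ) =
        ∑ u, ∑ v, B u v - ∑ u, ∑ v, (if P u ≠ P v then B u v else 0) := by
      rw [h]
      simp_rw [← sum_sub_distrib]
      refine sum_congr rfl fun u _ => sum_congr rfl fun v _ => ?_
      simp only [Sym2.mem_iff, forall_eq_or_imp, forall_eq, hB, ha]
      by_cases hP : P u = P v
      · simp only [hP, and_self, exists_eq', and_true, ne_eq, not_true, if_false, sub_zero]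
        split_ifs <;> rfl
      · simp [hP, Ne.symm hP]
    rw [hBS] at hin
    have hSv : 2 * (m : ℝ) - 4 * ε * m / 3 ≤ ∑ u ∈ S, ∑ v ∈ S, a u v := by
      rw [hmsum, Fintype.card_fin] at hSvol
      have h1 : 0 ≤ 2 * (ε * d / 3) * (S.card : ℝ) := by positivity
      have h2 : 2 * (ε * d / 3) * (n : ℝ) = 4 * ε * m / 3 := by
        linear_combination 2 * ε / 3 * hdn
      linarith
    linarith
  · have := hSdeg v hv
    rwa [← hdegR] at this
  set U := univ.filter fun v => v ∈ S ∧ P v = i with hU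
  have hUm : ∀ v, v ∈ U ↔ v ∈ S ∧ P v = i := fun v => by simp [hU]
  set y : Fin n → ℝ := fun v => z v / Real.sqrt (deg v) with hy
  set b : Fin n → Fin n → ℝ := fun u v => if u ∈ U ∧ v ∈ U then a u v else 0 with hb
  set wU : Fin n → ℝ := fun v => if v ∈ U then (deg v : ℝ) else 0 with hwU
  have hb0 : ∀ u v, 0 ≤ b u v := fun u v => by
    simp only [hb, ha]
    split_ifs <;> norm_num
  have hbw : ∀ u, ∑ v, b u v ≤ wU u := fun u => by
    by_cases hu : u ∈ U
    · have h1 : wU u = ∑ v, B u v := by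
        simp [hBw, hwU, hw, hu, ((hUm u).1 hu).1]
      rw [h1]
      refine sum_le_sum fun v _ => ?_
      simp only [hb, hB, ha, hUm]
      split_ifs <;> first | (norm_num; done) | tauto
    · simp [hb, hwU, hu]
  have hwUsum : ∀ A : Finset (Fin n), ∑ v ∈ A, wU v = ((∑ v ∈ A ∩ U, w v : ℕ) : ℝ) := by
    intro A
    push_cast
    rw [← filter_mem_eq_inter, sum_filter]
    refine sum_congr rfl fun v _ => ?_
    by_cases hv : v ∈ U
    · simp [hwU, hw, hv, ((hUm v).1 hv).1]
    · simp [hwU, hv]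
  have hPi : ∑ v with P v = i, w v = ∑ v ∈ U, w v := by
    refine (sum_subset (fun v hv => ?_) fun v hv hvU => ?_).symm
    · simpa using ((hUm v).1 hv).2
    · have hvS : v ∉ S := fun h => hvU ((hUm v).2 ⟨h, by simpa using hv⟩)
      simp [hw, hvS]
  have hexpU : ∀ A : Finset (Fin n), 2 * ∑ v ∈ A, wU v ≤ ∑ v, wU v →
      κ * Real.log 2 / 2 * ∑ v ∈ A, wU v ≤ ∑ u ∈ A, ∑ v ∈ Aᶜ, b u v := by
    intro A hA
    rw [hwUsum, hwUsum, univ_inter, ← hPi] at hA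
    rw [hwUsum]
    have h1 := hexp i (A ∩ U) (fun v hv => by
      simpa using ((hUm v).1 (mem_inter.1 hv).2).2) (by exact_mod_cast hA)
    refine h1.trans_eq ?_
    rw [sum_sum_eq_sum_sum_ite (A ∩ U), sum_sum_eq_sum_sum_ite A Aᶜ]
    refine sum_congr rfl fun u _ => sum_congr rfl fun v _ => ?_
    simp only [hb, hB, hUm, mem_inter, mem_sdiff, mem_filter, mem_univ, true_and, mem_compl]
    by_cases hu : u ∈ A <;> by_cases hv : v ∈ A <;> by_cases hu' : u ∈ S <;>
      by_cases hv' : v ∈ S <;> by_cases hPu : P u = i <;> simp [hu, hv, hu', hv', hPu]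
  have hsqrt : ∀ v ∈ U, Real.sqrt (deg v) ≠ 0 := fun v hv =>
    (Real.sqrt_pos.2 (hSpos v ((hUm v).1 hv).1)).ne'
  have hzU : ∀ v, v ∉ U → z v = 0 := fun v hv => hz v fun h => hv ((hUm v).2 h)
  have hsq : ∀ v, Real.sqrt (deg v) * Real.sqrt (deg v) = deg v := fun v =>
    Real.mul_self_sqrt (Nat.cast_nonneg _)
  change ∑ v, z v * Real.sqrt (deg v) = 0 at hzorth
  have horth : ∑ v, wU v * y v = 0 := by
    rw [← hzorth]
    refine sum_congr rfl fun v _ => ?_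
    by_cases hv : v ∈ U
    · have := hsqrt v hv
      simp only [hwU, hy, hv, if_true]
      nth_rewrite 1 [← hsq v]
      field_simp
    · simp [hwU, hv, hzU v hv]
  have hnorm : ∑ v, wU v * y v ^ 2 = ∑ v, z v ^ 2 := by
    refine sum_congr rfl fun v _ => ?_
    by_cases hv : v ∈ U
    · have := hsqrt v hv
      simp only [hwU, hy, hv, if_true]
      nth_rewrite 1 [← hsq v]
      field_simp
    · simp [hwU, hv, hzU v hv]
  have hch := cheeger_inequality b (fun u v => by simp only [hb, hasymm u v, and_comm]) hb0 wU hbw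
    (κ * Real.log 2 / 2) (by positivity) hexpU y horth
  have henergy : 2 * (y ⬝ᵥ ((∑ e ∈ G.edgeFinset.filter (fun e => ∀ v ∈ e, v ∈ S ∧ P v = i),
      edgeLapSym2 e) *ᵥ y)) = ∑ u, ∑ v, b u v * (y u - y v) ^ 2 := by
    rw [sum_mulVec, dotProduct_sum, sum_filter, two_mul_sum_edgeFinset]
    refine sum_congr rfl fun u _ => sum_congr rfl fun v _ => ?_
    simp only [Sym2.mem_iff, forall_eq_or_imp, forall_eq, edgeLapSym2_quadratic_form, hb, ha, hUm]
    split_ifs <;> simp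
  rw [hnorm, ← henergy] at hch
  have hconst : Real.log 2 ^ 2 / 288 * ε ^ 2 / Real.log m ^ 2 =
      (κ * Real.log 2 / 2) ^ 2 / 2 := by
    rw [hκ]
    field_simp
    norm_num
  rw [hconst]
  change _ ≤ y ⬝ᵥ ((∑ e ∈ G.edgeFinset.filter (fun e => ∀ v ∈ e, v ∈ S ∧ P v = i),
      edgeLapSym2 e) *ᵥ y)
  linarith
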